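/- arXiv:1808.03696 — 4 statements merged into one kernel-verified Lean document; each statement's English description precedes it below -/
import Mathlib

section
/- Let k ≥ 3 and let ℓ = k if k is even and ℓ = k + 1 if k is odd. Let G be a finite simple graph containing an edge uv such that: exactly one connected component of G contains an edge; the vertex set of this component is U ∪ V, where U and V are disjoint independent sets of G with u ∈ U and v ∈ V; and, setting U₀ = {u′ ∈ U : d(u′,u) < ℓ} and V₀ = {v′ ∈ V : d(v′,v) < ℓ}, every vertex of U ∪ V has a neighbor in U₀ ∪ V₀. Then for any two distinct vertices v′, v″ ∈ V, the distance d(v′,v″) is even and at most 2k, and consequently the graph obtained from G by adding the edge v′v″ contains an odd cycle of length at most 2k + 1. The same conclusion holds for any two distinct vertices of U. -/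
open SimpleGraph

/-- `G` contains a cycle of length `m`. -/
def hasCycleLength {α : Type*} (G : SimpleGraph α) (m : ℕ) : Prop :=
  ∃ (a : α) (w : G.Walk a a), w.IsCycle ∧ w.length = m

/-- The graph obtained from `G` by adding the edge `xy`. -/
def addEdge {α : Type*} (G : SimpleGraph α) (x y : α) : SimpleGraph α :=
  G ⊔ SimpleGraph.fromEdgeSet {s(x, y)}

/-!
Walks between vertices of the same class of the bipartition are even. If `w ∈ V` has a neighbor
`z ∈ U` with `d(z, u) < ℓ`, then `d(z, u)` and `ℓ` are both even, so `d(z, u) ≤ ℓ - 2` and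
`d(w, u) ≤ ℓ - 1 ≤ k`. Two vertices of `V` are therefore at even distance at most `2k`, and a new
edge between them closes a shortest path into an odd cycle.
-/

section ClosingEdge

variable {α : Type*} {G : SimpleGraph α} {x y : α}

theorem le_addEdge : G ≤ addEdge G x y :=
  le_sup_left

theorem adj_addEdge (hne : x ≠ y) : (addEdge G x y).Adj x y := by
  simp [addEdge, hne]

theorem hasCycleLength_addEdge_of_isPath {p : G.Walk x y} (hp : p.IsPath) (hne : x ≠ y)
    (hnadj : ¬ G.Adj x y) : hasCycleLength (addEdge G x y) (p.length + 1) := by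
  refine ⟨y, .cons (adj_addEdge hne).symm (p.mapLe le_addEdge), ?_, by simp⟩
  rw [Walk.cons_isCycle_iff, Walk.isPath_mapLe, Walk.edges_mapLe_eq_edges]
  exact ⟨hp, fun hmem => hnadj (p.adj_of_mem_edges hmem).symm⟩

theorem hasCycleLength_addEdge_dist_add_one (hxy : G.Reachable x y) (hne : x ≠ y)
    (hnadj : ¬ G.Adj x y) : hasCycleLength (addEdge G x y) (G.dist x y + 1) := by
  obtain ⟨p, hp, hlen⟩ := hxy.exists_path_of_dist
  exact hlen ▸ hasCycleLength_addEdge_of_isPath hp hne hnadj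

end ClosingEdge

/-- The disjoint sets `U` and `V` form a bipartition of a union of connected components of `G`:
every edge with an endpoint in `U ∪ V` joins `U` to `V`. Unlike `SimpleGraph.IsBipartiteWith`, this
allows edges outside `U ∪ V`. -/
structure IsClosedBipartition {α : Type*} (G : SimpleGraph α) (U V : Set α) : Prop where
  disjoint : Disjoint U V
  mem_left_iff_of_adj : ∀ ⦃a b : α⦄, G.Adj a b → (a ∈ U ↔ b ∈ V)

namespace IsClosedBipartition

variable {α : Type*} {G : SimpleGraph α} {U V : Set α} {u x y z : α} {k ℓ : ℕ}

theorem symm (h : IsClosedBipartition G U V) : IsClosedBipartition G V U where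
  disjoint := h.disjoint.symm
  mem_left_iff_of_adj _ _ hab := (h.mem_left_iff_of_adj hab.symm).symm

theorem of_supp_eq_union {c : G.ConnectedComponent} (hc : c.supp = U ∪ V)
    (hdisj : Disjoint U V) (hU : G.IsIndepSet U) (hV : G.IsIndepSet V) :
    IsClosedBipartition G U V where
  disjoint := hdisj
  mem_left_iff_of_adj a b hab := by
    have hunion : a ∈ U ∪ V ↔ b ∈ U ∪ V := hc ▸ c.mem_supp_congr_adj hab
    constructor
    · intro ha
      exact (hunion.mp (.inl ha)).resolve_left fun hb => hU ha hb hab.ne hab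
    · intro hb
      exact (hunion.mpr (.inr hb)).resolve_right fun ha => hV ha hb hab.ne hab

theorem not_adj_left (h : IsClosedBipartition G U V) (hx : x ∈ U) (hy : y ∈ U) : ¬ G.Adj x y :=
  fun hxy => h.disjoint.notMem_of_mem_left hy ((h.mem_left_iff_of_adj hxy).mp hx)

theorem even_length_iff (h : IsClosedBipartition G U V) (hx : x ∈ U) (hy : y ∈ U ∪ V)
    (p : G.Walk x y) : Even p.length ↔ y ∈ U := by
  induction p generalizing U V with
  | nil => simp [hx]
  | @cons x z y hxz p ih =>
    have hp : Even p.length ↔ y ∈ V :=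
      ih h.symm ((h.mem_left_iff_of_adj hxz).mp hx) (Set.union_comm U V ▸ hy)
    have hV : y ∈ V ↔ y ∉ U :=
      ⟨fun hyV => h.disjoint.notMem_of_mem_right hyV, hy.resolve_left⟩
    rw [Walk.length_cons, Nat.even_add_one, hp, hV, not_not]

theorem even_dist (h : IsClosedBipartition G U V) (hx : x ∈ U) (hy : y ∈ U) :
    Even (G.dist x y) := by
  by_cases hxy : G.Reachable x y
  · obtain ⟨p, hp⟩ := hxy.exists_walk_length_eq_dist
    exact hp ▸ (h.even_length_iff hx (.inl hy) p).mpr hy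
  · simp [dist_eq_zero_of_not_reachable hxy]

theorem dist_lt_of_adj (h : IsClosedBipartition G U V) (hℓ : Even ℓ) (hu : u ∈ U) (hz : z ∈ U)
    (hxz : G.Adj x z) (hzu : G.dist z u < ℓ) : G.dist x u < ℓ := by
  have htri : G.dist x u ≤ 1 + G.dist z u :=
    dist_eq_one_iff_adj.mpr hxz ▸ hxz.reachable.dist_triangle_left u
  obtain ⟨m, hm⟩ := h.even_dist hz hu
  obtain ⟨n, hn⟩ := hℓ
  omega

theorem dist_lt_of_exists_adj {W : Set α} (h : IsClosedBipartition G U V) (hℓ : Even ℓ)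
    (hu : u ∈ U) (hx : x ∈ V) (hW : W ⊆ V)
    (hnbr : ∃ z ∈ {u' ∈ U | G.dist u' u < ℓ} ∪ W, G.Adj x z) : G.dist x u < ℓ := by
  obtain ⟨z, ⟨hz, hzu⟩ | hz, hxz⟩ := hnbr
  · exact h.dist_lt_of_adj hℓ hu hz hxz hzu
  · exact absurd hxz (h.symm.not_adj_left hx (hW hz))

theorem exists_odd_hasCycleLength_addEdge (h : IsClosedBipartition G U V) (hx : x ∈ U)
    (hy : y ∈ U) (hne : x ≠ y) (hxy : G.Reachable x y) (hdist : G.dist x y ≤ k) :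
    ∃ m, Odd m ∧ m ≤ k + 1 ∧ hasCycleLength (addEdge G x y) m :=
  ⟨G.dist x y + 1, (h.even_dist hx hy).add_one, by gcongr,
    hasCycleLength_addEdge_dist_add_one hxy hne (h.not_adj_left hx hy)⟩

theorem even_dist_and_exists_odd_hasCycleLength (h : IsClosedBipartition G U V)
    (hx : x ∈ U) (hy : y ∈ U) (hne : x ≠ y) (hxu : G.Reachable x u) (hyu : G.Reachable y u)
    (hdx : G.dist x u ≤ k) (hdy : G.dist y u ≤ k) :
    (Even (G.dist x y) ∧ G.dist x y ≤ 2 * k) ∧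
      ∃ m, Odd m ∧ m ≤ 2 * k + 1 ∧ hasCycleLength (addEdge G x y) m := by
  have hdist : G.dist x y ≤ 2 * k := calc
    G.dist x y ≤ G.dist x u + G.dist u y := hxu.dist_triangle_left y
    _ = G.dist x u + G.dist y u := by rw [dist_comm (u := u)]
    _ ≤ 2 * k := by omega
  exact ⟨⟨h.even_dist hx hy, hdist⟩,
    h.exists_odd_hasCycleLength_addEdge hx hy hne (hxu.trans hyu.symm) hdist⟩

end IsClosedBipartition

theorem even_ite_even_add_one (k : ℕ) : Even (if Even k then k else k + 1) := by
  split_ifs with hk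
  · exact hk
  · exact Nat.even_add_one.mpr hk

theorem ite_even_add_one_le (k : ℕ) : (if Even k then k else k + 1) ≤ k + 1 := by
  split_ifs <;> omega

theorem stmt_1_general {α : Type*} (G : SimpleGraph α) (k ℓ : ℕ)
    (hℓ : ℓ = if Even k then k else k + 1)
    (u v : α) (U V : Set α)
    (hUV : {w | G.connectedComponentMk w = G.connectedComponentMk u} = U ∪ V)
    (hdisj : Disjoint U V)
    (hUind : ∀ a ∈ U, ∀ b ∈ U, ¬ G.Adj a b)
    (hVind : ∀ a ∈ V, ∀ b ∈ V, ¬ G.Adj a b)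
    (huU : u ∈ U) (hvV : v ∈ V)
    (hnbr : ∀ w ∈ U ∪ V, ∃ z ∈ {u' ∈ U | G.dist u' u < ℓ} ∪ {v' ∈ V | G.dist v' v < ℓ},
      G.Adj w z) :
    (∀ v' ∈ V, ∀ v'' ∈ V, v' ≠ v'' →
      (Even (G.dist v' v'') ∧ G.dist v' v'' ≤ 2 * k) ∧
      (∃ m, Odd m ∧ m ≤ 2 * k + 1 ∧ hasCycleLength (addEdge G v' v'') m)) ∧
    (∀ u' ∈ U, ∀ u'' ∈ U, u' ≠ u'' →
      (Even (G.dist u' u'') ∧ G.dist u' u'' ≤ 2 * k) ∧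
      (∃ m, Odd m ∧ m ≤ 2 * k + 1 ∧ hasCycleLength (addEdge G u' u'') m)) := by
  have hbip : IsClosedBipartition G U V := .of_supp_eq_union hUV hdisj
    (fun a ha b hb _ => hUind a ha b hb) (fun a ha b hb _ => hVind a ha b hb)
  have hreach : ∀ a ∈ U ∪ V, ∀ b ∈ U ∪ V, G.Reachable a b := fun a ha b hb =>
    (G.connectedComponentMk u).reachable_of_mem_supp (hUV.ge ha) (hUV.ge hb)
  have hℓeven : Even ℓ := hℓ ▸ even_ite_even_add_one k
  have hℓle : ℓ ≤ k + 1 := hℓ ▸ ite_even_add_one_le k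
  have hdistV : ∀ w ∈ V, G.dist w u ≤ k := fun w hw => Nat.le_of_lt_succ <|
    (hbip.dist_lt_of_exists_adj hℓeven huU hw (Set.sep_subset _ _) (hnbr w (.inr hw))).trans_le hℓle
  have hdistU : ∀ w ∈ U, G.dist w v ≤ k := fun w hw => Nat.le_of_lt_succ <|
    (hbip.symm.dist_lt_of_exists_adj hℓeven hvV hw (Set.sep_subset _ _)
      (Set.union_comm _ _ ▸ hnbr w (.inl hw))).trans_le hℓle
  constructor
  · intro x hx y hy hne
    exact hbip.symm.even_dist_and_exists_odd_hasCycleLength hx hy hne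
      (hreach x (.inr hx) u (.inl huU)) (hreach y (.inr hy) u (.inl huU))
      (hdistV x hx) (hdistV y hy)
  · intro x hx y hy hne
    exact hbip.even_dist_and_exists_odd_hasCycleLength hx hy hne
      (hreach x (.inl hx) v (.inr hvV)) (hreach y (.inl hy) v (.inr hvV))
      (hdistU x hx) (hdistU y hy)

theorem stmt_1 {α : Type*} [Fintype α] (G : SimpleGraph α) (k ℓ : ℕ) (hk : 3 ≤ k)
    (hℓ : ℓ = if Even k then k else k + 1)
    (u v : α) (U V : Set α)
    (huv : G.Adj u v)
    (hcomp : ∃! c : G.ConnectedComponent, ∃ x y, G.Adj x y ∧ G.connectedComponentMk x = c)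
    (hUV : {w | G.connectedComponentMk w = G.connectedComponentMk u} = U ∪ V)
    (hdisj : Disjoint U V)
    (hUind : ∀ a ∈ U, ∀ b ∈ U, ¬ G.Adj a b)
    (hVind : ∀ a ∈ V, ∀ b ∈ V, ¬ G.Adj a b)
    (huU : u ∈ U) (hvV : v ∈ V)
    (hnbr : ∀ w ∈ U ∪ V, ∃ z ∈ {u' ∈ U | G.dist u' u < ℓ} ∪ {v' ∈ V | G.dist v' v < ℓ},
      G.Adj w z) :
    (∀ v' ∈ V, ∀ v'' ∈ V, v' ≠ v'' →
      (Even (G.dist v' v'') ∧ G.dist v' v'' ≤ 2 * k) ∧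
      (∃ m, Odd m ∧ m ≤ 2 * k + 1 ∧ hasCycleLength (addEdge G v' v'') m)) ∧
    (∀ u' ∈ U, ∀ u'' ∈ U, u' ≠ u'' →
      (Even (G.dist u' u'') ∧ G.dist u' u'' ≤ 2 * k) ∧
      (∃ m, Odd m ∧ m ≤ 2 * k + 1 ∧ hasCycleLength (addEdge G u' u'') m)) :=
  stmt_1_general G k ℓ hℓ u v U V hUV hdisj hUind hVind huU hvV hnbr
end

section
/- Let G be a finite simple connected graph in which every vertex has degree at least 3 and which contains no cycle of length at least 5. Then there exist four vertices x, x₁, x₂, x₃ of G that are pairwise adjacent (so {x, x₁, x₂, x₃} induces a K₄ in G) and such that x, x₁ and x₂ each have degree exactly 3 in G. -/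
open SimpleGraph

/-!
Suppose all degrees are at least `k` and all cycles have length at most `k + 1`. The first vertex
`u` of a longest path `p` has all its neighbors on `p`, and a neighbor at distance more than `k`
along `p` would close a long cycle. Hence `u` has degree `k`, and it is adjacent to all of the
next `k` vertices of `p`. Now `p` can be rotated (in the sense of Pósa) so as to start at any of
its first `k` vertices: the result is again a longest path, with the same set of first `k + 1`
vertices. So each of these `k` vertices has degree `k` and is adjacent to the rest of that set.
-/

/-- Every cycle of `G` has length at most `m`; for a forest this holds for every `m`. -/
def CircumferenceLE {V : Type*} (G : SimpleGraph V) (m : ℕ) : Prop :=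
  ∀ ⦃a : V⦄ (c : G.Walk a a), c.IsCycle → c.length ≤ m

/-- A walk is a longest path of `G` if it is a path and no path of `G`, between whatever end
vertices, is longer. This is the extremal object the argument is applied to. -/
structure IsLongestPath {V : Type*} {G : SimpleGraph V} {u v : V} (p : G.Walk u v) : Prop where
  isPath : p.IsPath
  length_le : ∀ ⦃a b : V⦄ (q : G.Walk a b), q.IsPath → q.length ≤ p.length

theorem take_reverse_append_perm {α : Type*} {l₁ : List α} (l₂ : List α) {n : ℕ}
    (h : l₁.length ≤ n) : ((l₁.reverse ++ l₂).take n).Perm ((l₁ ++ l₂).take n) := by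
  rw [List.take_append, List.take_append, List.take_of_length_le h,
    List.take_of_length_le (by simpa using h), List.length_reverse]
  exact (List.reverse_perm l₁).append_right _

section

variable {V : Type*} {G : SimpleGraph V} {u v w : V} {p : G.Walk u v} {i j k n : ℕ}

theorem exists_isLongestPath (G : SimpleGraph V) [Nonempty V] [Finite G.edgeSet] :
    ∃ (u v : V) (p : G.Walk u v), IsLongestPath p := by
  obtain ⟨u, v, p, hp, hmax⟩ := Walk.exists_isPath_forall_isPath_length_le_length G
  exact ⟨u, v, p, hp, hmax⟩

theorem isCycle_cons_of_two_le_length (hp : p.IsPath) (h : G.Adj v u) (hlen : 2 ≤ p.length) :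
    (p.cons h).IsCycle := by
  refine (Walk.cons_isCycle_iff p h).2 ⟨hp, fun hmem => ?_⟩
  have := hp.length_eq_one_of_mem_edges (Sym2.eq_swap ▸ hmem)
  omega

theorem getVert_mem_support_take (p : G.Walk u v) (hi : i < n) :
    p.getVert i ∈ p.support.take n := by
  have hmem := (p.take i).end_mem_support
  rw [Walk.support_take] at hmem
  exact List.take_subset_take_left _ hi hmem

namespace IsLongestPath

theorem mem_support_of_adj (hp : IsLongestPath p) (h : G.Adj u w) : w ∈ p.support := by
  by_contra hw
  have hle : (p.cons h.symm).length ≤ p.length := hp.length_le _ (hp.isPath.cons hw)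
  rw [Walk.length_cons] at hle
  omega

theorem mem_support_take_of_adj (hp : IsLongestPath p) (hk : 0 < k)
    (hcyc : CircumferenceLE G (k + 1)) (h : G.Adj u w) : w ∈ p.support.take (k + 1) := by
  classical
  have hw := hp.mem_support_of_adj h
  have hlen : (p.takeUntil w hw).length < k + 1 := by
    by_contra! hle
    have := hcyc _ (isCycle_cons_of_two_le_length (hp.isPath.takeUntil hw) h.symm (by omega))
    rw [Walk.length_cons] at this
    omega
  rw [← p.getVert_length_takeUntil hw]
  exact getVert_mem_support_take p hlen

section FirstVertex

variable [Fintype (G.neighborSet u)]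

theorem degree_le_length (hp : IsLongestPath p) : G.degree u ≤ p.length := by
  classical
  have hsub : insert u (G.neighborFinset u) ⊆ p.support.toFinset := by
    refine Finset.insert_subset (by simp) fun w hw => ?_
    exact List.mem_toFinset.2 (hp.mem_support_of_adj (by simpa using hw))
  simpa using (Finset.card_le_card hsub).trans (List.toFinset_card_le _)

theorem insert_neighborFinset_subset [DecidableEq V] (hp : IsLongestPath p) (hk : 0 < k)
    (hcyc : CircumferenceLE G (k + 1)) :
    insert u (G.neighborFinset u) ⊆ (p.support.take (k + 1)).toFinset := by
  refine Finset.insert_subset ?_ fun w hw => ?_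
  · simpa using getVert_mem_support_take p k.succ_pos
  · exact List.mem_toFinset.2 (hp.mem_support_take_of_adj hk hcyc (by simpa using hw))

theorem degree_le (hp : IsLongestPath p) (hk : 0 < k) (hcyc : CircumferenceLE G (k + 1)) :
    G.degree u ≤ k := by
  classical
  have hcard := (Finset.card_le_card (hp.insert_neighborFinset_subset hk hcyc)).trans
    ((List.toFinset_card_le _).trans (List.length_take_le _ _))
  simpa using hcard

theorem adj_of_mem_support_take (hp : IsLongestPath p) (hk : 0 < k)
    (hcyc : CircumferenceLE G (k + 1)) (hdeg : k ≤ G.degree u)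
    (hw : w ∈ p.support.take (k + 1)) (hne : w ≠ u) : G.Adj u w := by
  classical
  have hcard : (p.support.take (k + 1)).toFinset.card ≤
      (insert u (G.neighborFinset u)).card := calc
    _ ≤ k + 1 := (List.toFinset_card_le _).trans (List.length_take_le _ _)
    _ ≤ _ := by simpa using hdeg
  have heq : insert u (G.neighborFinset u) = (p.support.take (k + 1)).toFinset :=
    Finset.eq_of_subset_of_card_le (hp.insert_neighborFinset_subset hk hcyc) hcard
  rw [← List.mem_toFinset, ← heq] at hw
  simpa [hne] using hw

end FirstVertex

/-- The rotated path visits `xᵢ, xᵢ₋₁, …, x₀, xᵢ₊₁, xᵢ₊₂, …` where `p` visits `x₀, x₁, x₂, …`. -/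
theorem exists_rotation (hp : IsLongestPath p) (hi : i < p.length)
    (h : G.Adj u (p.getVert (i + 1))) :
    ∃ q : G.Walk (p.getVert i) v, IsLongestPath q ∧
      q.support = (p.support.take (i + 1)).reverse ++ p.support.drop (i + 1) := by
  let q := (p.take i).reverse.append ((p.drop (i + 1)).cons h)
  have hsupp : q.support = (p.support.take (i + 1)).reverse ++ p.support.drop (i + 1) := by
    simp [q, Walk.support_append, Walk.support_take, Nat.min_eq_left (Nat.succ_le_of_lt hi)]
  have hperm : q.support.Perm p.support := by
    rw [hsupp]
    simpa only [List.take_append_drop] using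
      (List.reverse_perm (p.support.take (i + 1))).append_right (p.support.drop (i + 1))
  have hpath : q.IsPath := (Walk.isPath_def q).2 (hperm.nodup_iff.2 hp.isPath.support_nodup)
  have hlen : q.length = p.length := by simpa using hperm.length_eq
  exact ⟨q, ⟨hpath, hlen ▸ hp.length_le⟩, hsupp⟩

theorem exists_isLongestPath_getVert [Fintype (G.neighborSet u)] (hp : IsLongestPath p)
    (hcyc : CircumferenceLE G (k + 1)) (hdeg : k ≤ G.degree u) (hi : i < k) :
    ∃ q : G.Walk (p.getVert i) v, IsLongestPath q ∧
      (q.support.take (k + 1)).Perm (p.support.take (k + 1)) := by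
  have hlen : i + 1 ≤ p.length := hi.trans_le (hdeg.trans hp.degree_le_length)
  have hne : p.getVert (i + 1) ≠ u := fun heq => by
    simpa using (hp.isPath.getVert_eq_start_iff hlen).1 heq
  have hadj : G.Adj u (p.getVert (i + 1)) := hp.adj_of_mem_support_take (by omega) hcyc hdeg
    (getVert_mem_support_take p (by omega)) hne
  obtain ⟨q, hq, hsupp⟩ := hp.exists_rotation hlen hadj
  have hperm := take_reverse_append_perm (p.support.drop (i + 1))
    ((List.length_take_le (i + 1) p.support).trans (Nat.succ_le_succ hi.le))
  rw [← hsupp, List.take_append_drop] at hperm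
  exact ⟨q, hq, hperm⟩

section MinDegree

variable [G.LocallyFinite]

theorem degree_getVert (hp : IsLongestPath p) (hcyc : CircumferenceLE G (k + 1))
    (hdeg : ∀ x, k ≤ G.degree x) (hi : i < k) : G.degree (p.getVert i) = k := by
  obtain ⟨q, hq, -⟩ := hp.exists_isLongestPath_getVert hcyc (hdeg u) hi
  exact (hq.degree_le (by omega) hcyc).antisymm (hdeg _)

theorem adj_getVert (hp : IsLongestPath p) (hcyc : CircumferenceLE G (k + 1))
    (hdeg : ∀ x, k ≤ G.degree x) (hij : i < j) (hj : j ≤ k) :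
    G.Adj (p.getVert i) (p.getVert j) := by
  have hlen : k ≤ p.length := (hdeg u).trans hp.degree_le_length
  have hne : p.getVert j ≠ p.getVert i := fun heq =>
    hij.ne' (hp.isPath.getVert_injOn (hj.trans hlen) (hij.le.trans (hj.trans hlen)) heq)
  obtain ⟨q, hq, hperm⟩ := hp.exists_isLongestPath_getVert hcyc (hdeg u) (hij.trans_le hj)
  exact hq.adj_of_mem_support_take (by omega) hcyc (hdeg _)
    (hperm.mem_iff.2 (getVert_mem_support_take p (by omega))) hne

end MinDegree

end IsLongestPath

end

theorem stmt_5_general {V : Type*} [Finite V] [Nonempty V] (G : SimpleGraph V) [G.LocallyFinite]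
    (k : ℕ) (hdeg : ∀ x, k ≤ G.degree x) (hnc : ∀ m, k + 2 ≤ m → ¬ hasCycleLength G m) :
    ∃ x : Fin (k + 1) → V, (∀ i j, i < j → G.Adj (x i) (x j)) ∧
      ∀ i : Fin k, G.degree (x i.castSucc) = k := by
  have hcyc : CircumferenceLE G (k + 1) := fun a c hc => by
    by_contra! hlt
    exact hnc c.length hlt ⟨a, c, hc, rfl⟩
  obtain ⟨u, v, p, hp⟩ := exists_isLongestPath G
  exact ⟨fun i => p.getVert i, fun i j hij => hp.adj_getVert hcyc hdeg hij j.is_le,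
    fun i => hp.degree_getVert hcyc hdeg i.is_lt⟩

theorem stmt_5 {α : Type*} [Fintype α] (G : SimpleGraph α) [DecidableRel G.Adj]
    (hconn : G.Connected) (hdeg : ∀ w, 3 ≤ G.degree w)
    (hnc : ∀ m, 5 ≤ m → ¬ hasCycleLength G m) :
    ∃ x x₁ x₂ x₃ : α, G.Adj x x₁ ∧ G.Adj x x₂ ∧ G.Adj x x₃ ∧
      G.Adj x₁ x₂ ∧ G.Adj x₁ x₃ ∧ G.Adj x₂ x₃ ∧
      G.degree x = 3 ∧ G.degree x₁ = 3 ∧ G.degree x₂ = 3 := by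
  have := hconn.nonempty
  obtain ⟨x, hadj, hx⟩ := stmt_5_general G 3 hdeg hnc
  exact ⟨x 0, x 1, x 2, x 3, hadj 0 1 (by decide), hadj 0 2 (by decide), hadj 0 3 (by decide),
    hadj 1 2 (by decide), hadj 1 3 (by decide), hadj 2 3 (by decide), hx 0, hx 1, hx 2⟩
end

section
/- For every integer k ≥ 1 there exists a finite simple graph G on 2k + 2 vertices with exactly 3k + 1 edges such that G is 0-good and contains no odd cycle of length at least 5. (Such a graph has vertex set {u, v, x₁, …, x_k, y₁, …, y_k} and edge set consisting of uv and the edges x_iu, x_iv, x_iy_i for all 1 ≤ i ≤ k.) -/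
open SimpleGraph

/-- A vertex `w` of `H` is good if all but at most one of the edges of `H` incident
to `w` are contained in a triangle of `H`. -/
def goodVertex {α : Type*} (H : SimpleGraph α) (w : α) : Prop :=
  {z | H.Adj w z ∧ ¬ ∃ t, H.Adj w t ∧ H.Adj z t}.Subsingleton

/-- `G` is `k`-good: there is a set `B` of at most `k` edges of `G` such that every
vertex of `G − B` is good in `G − B`. -/
def kGood {α : Type*} (G : SimpleGraph α) (k : ℕ) : Prop :=
  ∃ B : Set (Sym2 α), B ⊆ G.edgeSet ∧ B.ncard ≤ k ∧ ∀ w, goodVertex (G.deleteEdges B) w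

/-!
In a triangular book with spine `uv`, pages `xᵢ` and a leaf `yᵢ` attached to each page, the edges
`uxᵢ` and `vxᵢ` lie in the triangles `uvxᵢ`, while all the other edges (`uv` and the `xᵢyᵢ`) form a
perfect matching, so every vertex is good. A cycle avoids the leaves, so each of its edges meets
`{u, v}`; since a vertex lies on only two edges of a cycle, the cycle has length at most `4`.
-/

section Cycle

variable {V : Type*} {G : SimpleGraph V} {a : V} {w : G.Walk a a}

lemma notMem_support_of_isCycle_of_subsingleton_neighborSet (hw : w.IsCycle) {v : V}
    (hv : (G.neighborSet v).Subsingleton) : v ∉ w.support := by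
  intro hvw
  obtain ⟨x, y, hxy, neighbors⟩ :=
    Set.ncard_eq_two.mp (hw.ncard_neighborSet_toSubgraph_eq_two hvw)
  refine hxy (hv.anti (w.toSubgraph.neighborSet_subset v) ?_ ?_) <;> simp [neighbors]

lemma length_le_two_mul_card_of_isCycle_of_isVertexCover (hw : w.IsCycle) {S : Finset V}
    (hS : w.toSubgraph.spanningCoe.IsVertexCover S) : w.length ≤ 2 * S.card := by
  classical
  let I := Finset.range w.length
  let first : Finset ℕ := {i ∈ I | w.getVert i ∈ S}
  let second : Finset ℕ := {i ∈ I | w.getVert (i + 1) ∈ S}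
  have cover : I ⊆ first ∪ second := fun i hi ↦ by
    have := hS (w.toSubgraph_adj_getVert (Finset.mem_range.mp hi))
    simpa [first, second, hi] using this
  have card_first : first.card ≤ S.card := by
    refine Finset.card_le_card_of_injOn w.getVert (fun i hi ↦ (Finset.mem_filter.mp hi).2)
      (hw.getVert_injOn'.mono fun i hi ↦ ?_)
    exact Nat.le_sub_one_of_lt (Finset.mem_range.mp (Finset.mem_filter.mp hi).1)
  have card_second : second.card ≤ S.card := by
    refine Finset.card_le_card_of_injOn (fun i ↦ w.getVert (i + 1))
      (fun i hi ↦ (Finset.mem_filter.mp hi).2) fun i hi j hj hij ↦ ?_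
    have hi : i < w.length := Finset.mem_range.mp (Finset.mem_filter.mp hi).1
    have hj : j < w.length := Finset.mem_range.mp (Finset.mem_filter.mp hj).1
    exact Nat.succ_injective (hw.getVert_injOn ⟨i.succ_pos, hi⟩ ⟨j.succ_pos, hj⟩ hij)
  calc w.length = I.card := (Finset.card_range _).symm
    _ ≤ (first ∪ second).card := Finset.card_le_card cover
    _ ≤ first.card + second.card := Finset.card_union_le _ _
    _ ≤ 2 * S.card := by omega

end Cycle

section Transfer

variable {V W : Type*} {G : SimpleGraph V} {H : SimpleGraph W}

lemma hasCycleLength.map {m : ℕ} (h : hasCycleLength G m) (f : G →g H)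
    (hf : Function.Injective f) : hasCycleLength H m := by
  obtain ⟨a, w, hw, rfl⟩ := h
  exact ⟨f a, w.map f, hw.map hf, w.length_map f⟩

lemma goodVertex.of_iso (e : G ≃g H) {v : V} (h : goodVertex H (e v)) : goodVertex G v := by
  have image_mem {z : V} (hz : G.Adj v z ∧ ¬ ∃ t, G.Adj v t ∧ G.Adj z t) :
      H.Adj (e v) (e z) ∧ ¬ ∃ t, H.Adj (e v) t ∧ H.Adj (e z) t := by
    simpa only [e.surjective.exists, e.map_adj_iff] using hz
  exact fun x hx y hy ↦ e.injective (h (image_mem hx) (image_mem hy))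

lemma kGood_zero_of_forall_goodVertex (h : ∀ v, goodVertex G v) : kGood G 0 :=
  ⟨∅, Set.empty_subset _, Set.ncard_empty _ |>.le, by rwa [deleteEdges_empty]⟩

end Transfer

/-- The triangular book with page set `ι` and a leaf attached to each page: the spine is
`u = (none, false)`, `v = (none, true)`, page `i` is `xᵢ = (some i, false)` and its leaf is
`yᵢ = (some i, true)`. With this encoding the edges `uv` and `xᵢyᵢ` are exactly the pairs
`(a, false)`, `(a, true)`. -/
def pendantBook (ι : Type*) : SimpleGraph (Option ι × Bool) where
  Adj
    | (none, b), (none, c) => b ≠ c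
    | (none, _), (some _, c) => c = false
    | (some _, b), (none, _) => b = false
    | (some i, b), (some j, c) => i = j ∧ b ≠ c
  symm := ⟨by rintro ⟨_ | i, b⟩ ⟨_ | j, c⟩ h <;> simp_all [eq_comm]⟩
  loopless := ⟨by rintro ⟨_ | i, b⟩ h <;> simp_all⟩

namespace pendantBook

variable {ι : Type*}

lemma exists_adj_adj_of_adj_of_ne {p q : Option ι × Bool} (h : (pendantBook ι).Adj p q)
    (hq : q ≠ (p.1, !p.2)) : ∃ t, (pendantBook ι).Adj p t ∧ (pendantBook ι).Adj q t := by
  obtain ⟨_ | i, b⟩ := p <;> obtain ⟨_ | j, c⟩ := q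
  · exact (hq (Prod.ext rfl (Bool.eq_not.mpr (Ne.symm h)))).elim
  · exact ⟨(none, !b), by simp [pendantBook], h⟩
  · exact ⟨(none, !c), h, by simp [pendantBook]⟩
  · obtain ⟨rfl, hbc⟩ := h
    exact (hq (Prod.ext rfl (Bool.eq_not.mpr (Ne.symm hbc)))).elim

lemma forall_goodVertex (p : Option ι × Bool) : goodVertex (pendantBook ι) p := by
  have eq_partner {q} (hq : (pendantBook ι).Adj p q ∧
      ¬ ∃ t, (pendantBook ι).Adj p t ∧ (pendantBook ι).Adj q t) : q = (p.1, !p.2) :=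
    not_imp_comm.mp (exists_adj_adj_of_adj_of_ne hq.1) hq.2
  exact fun q hq r hr ↦ (eq_partner hq).trans (eq_partner hr).symm

lemma neighborSet_leaf_subsingleton (i : ι) :
    ((pendantBook ι).neighborSet (some i, true)).Subsingleton := by
  have eq_page {p} (hp : (pendantBook ι).Adj (some i, true) p) : p = (some i, false) := by
    obtain ⟨_ | j, b⟩ := p <;> simp_all [pendantBook]
  exact fun p hp q hq ↦ (eq_page hp).trans (eq_page hq).symm

/-- The edges of `pendantBook ι`: first `uv` and the `xᵢyᵢ`, then the `uxᵢ` and `vxᵢ`. -/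
def edge : Option ι ⊕ ι × Bool → Sym2 (Option ι × Bool)
  | .inl a => s((a, false), (a, true))
  | .inr (i, b) => s((none, b), (some i, false))

lemma edge_injective : Function.Injective (edge (ι := ι)) := by
  rintro ((_ | i) | ⟨i, b⟩) ((_ | j) | ⟨j, c⟩) h <;> simp_all [edge]

lemma range_edge : Set.range edge = (pendantBook ι).edgeSet := by
  ext e
  constructor
  · rintro ⟨(_ | i) | ⟨i, b⟩, rfl⟩ <;> simp [edge, pendantBook]
  · induction e with | _ p q
    obtain ⟨_ | i, b⟩ := p <;> obtain ⟨_ | j, c⟩ := q <;> intro h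
    · exact ⟨.inl none, by cases b <;> cases c <;> simp_all [edge, pendantBook]⟩
    · exact ⟨.inr (j, b), by simp_all [edge, pendantBook]⟩
    · exact ⟨.inr (i, c), by simp_all [edge, pendantBook]⟩
    · exact ⟨.inl (some i), by cases b <;> cases c <;> simp_all [edge, pendantBook]⟩

lemma ncard_edgeSet [Finite ι] : (pendantBook ι).edgeSet.ncard = 3 * Nat.card ι + 1 := by
  rw [← range_edge, ← Set.image_univ, Set.ncard_image_of_injective _ edge_injective,
    Set.ncard_univ, Nat.card_sum, Nat.card_prod, Finite.card_option,
    Nat.card_eq_fintype_card (α := Bool), Fintype.card_bool]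
  omega

lemma isVertexCover_spine {a : Option ι × Bool} {w : (pendantBook ι).Walk a a} (hw : w.IsCycle) :
    w.toSubgraph.spanningCoe.IsVertexCover ({none} ×ˢ Finset.univ : Finset (Option ι × Bool)) := by
  have leaf_notMem (i : ι) : (some i, true) ∉ w.support :=
    notMem_support_of_isCycle_of_subsingleton_neighborSet hw (neighborSet_leaf_subsingleton i)
  intro p q hpq
  have hp := w.mem_verts_toSubgraph.mp (w.toSubgraph.edge_vert hpq)
  have hq := w.mem_verts_toSubgraph.mp (w.toSubgraph.edge_vert hpq.symm)
  have hadj := w.toSubgraph.adj_sub hpq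
  obtain ⟨_ | i, _ | _⟩ := p <;> obtain ⟨_ | j, _ | _⟩ := q <;> simp_all [pendantBook]

lemma length_le_four_of_isCycle {a : Option ι × Bool} {w : (pendantBook ι).Walk a a}
    (hw : w.IsCycle) : w.length ≤ 4 := by
  simpa using length_le_two_mul_card_of_isCycle_of_isVertexCover hw (isVertexCover_spine hw)

end pendantBook

theorem stmt_8_general (k : ℕ) :
    ∃ G : SimpleGraph (Fin (2 * k + 2)),
      G.edgeSet.ncard = 3 * k + 1 ∧ kGood G 0 ∧ ∀ m, 5 ≤ m → ¬ hasCycleLength G m := by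
  have card_eq : Fintype.card (Fin (2 * k + 2)) = Fintype.card (Option (Fin k) × Bool) := by
    simp only [Fintype.card_fin, Fintype.card_prod, Fintype.card_option, Fintype.card_bool]
    omega
  let f := Fintype.equivOfCardEq card_eq
  let e : (pendantBook (Fin k)).comap f ≃g pendantBook (Fin k) := Iso.comap f _
  refine ⟨(pendantBook (Fin k)).comap f, ?_, ?_, ?_⟩
  · calc ((pendantBook (Fin k)).comap f).edgeSet.ncard
        = (pendantBook (Fin k)).edgeSet.ncard := Nat.card_congr e.mapEdgeSet
      _ = 3 * k + 1 := by rw [pendantBook.ncard_edgeSet, Nat.card_fin]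
  · exact kGood_zero_of_forall_goodVertex fun v ↦ (pendantBook.forall_goodVertex (e v)).of_iso
  · intro m hm h
    obtain ⟨a, w, hw, rfl⟩ := h.map e.toHom e.injective
    exact absurd (pendantBook.length_le_four_of_isCycle hw) (by omega)

theorem stmt_8 (k : ℕ) (hk : 1 ≤ k) :
    ∃ G : SimpleGraph (Fin (2 * k + 2)),
      G.edgeSet.ncard = 3 * k + 1 ∧ kGood G 0 ∧
      ∀ m, 5 ≤ m → Odd m → ¬ hasCycleLength G m := by
  obtain ⟨G, hedges, hgood, hcycle⟩ := stmt_8_general k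
  exact ⟨G, hedges, hgood, fun m hm _ ↦ hcycle m hm⟩
end

section
/- Let k ≥ 1 and let G be a finite simple graph containing no odd cycle of length less than 2k + 1 (no cycle C_{2j+1} for any 1 ≤ j ≤ k − 1). Suppose x′ is a vertex adjacent to two distinct vertices v′ and v″, and suppose x is a vertex distinct from x′, v′ and v″ whose unique neighbor in G is v′. Then the graph obtained from G by adding the edge xv″ contains no odd cycle of length less than 2k + 1. -/
open SimpleGraph

/-!
A common neighbour `x'` of `v'` and `v''` dominates `x`: every neighbour of `x` is a neighbour of
`x'`. Hence folding `x` onto `x'` is a homomorphism `G → G`, and it extends to `G + xv''` because it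
sends `xv''` to the edge `x'v''`. An odd cycle of `G + xv''` thus becomes an odd closed walk of the
same length in `G`. Such a walk contains an odd cycle: shortening a walk to a path removes, one at a
time, closed walks that are cycles or back-and-forth steps; if all the cycles among them were even,
the length would keep its parity, but the closed walk ends up as the empty path.
-/

section OddClosedWalk

variable {α : Type*} {G : SimpleGraph α} {n : ℕ} {u v : α}

theorem isCycle_cons_of_isPath_of_even_length {p : G.Walk v u} (h : G.Adj u v) (hp : p.IsPath)
    (heven : Even p.length) : (Walk.cons h p).IsCycle := by
  have hpos : p.length ≠ 0 := fun h0 ↦ h.ne (Walk.eq_of_length_eq_zero h0).symm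
  rw [Walk.isCycle_iff_isPath_tail_and_le_length]
  refine ⟨by simpa using hp, ?_⟩
  rw [Walk.length_cons]
  grind

theorem even_length_bypass_iff [DecidableEq α] (p : G.Walk u v)
    (hno : ∀ m ≤ p.length, Odd m → ¬ hasCycleLength G m) :
    Even p.bypass.length ↔ Even p.length := by
  induction p with
  | nil => rfl
  | @cons u w v h p ih =>
    rw [Walk.length_cons] at hno ⊢
    have hparity : Even p.bypass.length ↔ Even p.length :=
      ih fun m hm ↦ hno m (by lia)
    have hle : p.bypass.length ≤ p.length := p.length_bypass_le_length
    by_cases hu : u ∈ p.bypass.support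
    · have hsplit : (p.bypass.takeUntil u hu).length + (p.bypass.dropUntil u hu).length =
          p.bypass.length := by
        rw [← Walk.length_append, Walk.take_spec]
      have hodd : ¬ Even (p.bypass.takeUntil u hu).length := fun heven ↦
        hno ((p.bypass.takeUntil u hu).length + 1) (by lia) heven.add_one
          ⟨u, .cons h _, isCycle_cons_of_isPath_of_even_length h
            (p.bypass_isPath.takeUntil hu) heven, Walk.length_cons ..⟩
      simp only [Walk.bypass, hu, ↓reduceDIte]
      grind
    · simp only [Walk.bypass, hu, ↓reduceDIte, Walk.length_cons]
      grind

theorem exists_odd_hasCycleLength_le_length (w : G.Walk u u) (hw : Odd w.length) :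
    ∃ m ≤ w.length, Odd m ∧ hasCycleLength G m := by
  classical
  by_contra! hno
  have hnil : w.bypass.length = 0 :=
    Walk.length_eq_zero_iff.2 (Walk.isPath_iff_nil.1 w.bypass_isPath)
  have heven : Even w.length := (even_length_bypass_iff w hno).1 (by simp [hnil])
  exact Nat.not_even_iff_odd.2 hw heven

theorem hasCycleLength.three_le (h : hasCycleLength G n) : 3 ≤ n := by
  obtain ⟨a, w, hw, rfl⟩ := h
  exact hw.three_le_length

theorem hasCycleLength.exists_odd_le_of_hom {β : Type*} {H : SimpleGraph β}
    (h : hasCycleLength G n) (hn : Odd n) (f : G →g H) :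
    ∃ m ≤ n, Odd m ∧ hasCycleLength H m := by
  obtain ⟨a, w, -, rfl⟩ := h
  simpa only [Walk.length_map] using
    exists_odd_hasCycleLength_le_length (w.map f) (by rwa [Walk.length_map])

end OddClosedWalk

section Fold

variable {α : Type*} {G : SimpleGraph α} {x y z : α}

/-- The extension of a graph homomorphism `f` to the graph with the extra edge `xy`, available when
`f x` and `f y` are adjacent. -/
def addEdge.liftHom {β : Type*} {H : SimpleGraph β} (f : G →g H) (hxy : H.Adj (f x) (f y)) :
    addEdge G x y →g H where
  toFun := f
  map_rel' {a b} hab := by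
    simp only [addEdge, sup_adj, fromEdgeSet_adj, Set.mem_singleton_iff, Sym2.eq_iff] at hab
    obtain hab | ⟨⟨rfl, rfl⟩ | ⟨rfl, rfl⟩, -⟩ := hab
    exacts [f.map_adj hab, hxy, hxy.symm]

/-- The endomorphism of `G` folding a vertex `x` onto a vertex `y` that dominates it, that is,
whose neighbourhood contains the neighbourhood of `x`; all other vertices are fixed. -/
def foldHom [DecidableEq α] (hxy : G.neighborSet x ⊆ G.neighborSet y) : G →g G where
  toFun := Function.update id x y
  map_rel' {a b} hab := by
    obtain rfl | ha := eq_or_ne a x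
    · simpa [hab.ne'] using hxy hab
    obtain rfl | hb := eq_or_ne b x
    · simpa [ha] using (hxy hab.symm).symm
    · simpa [ha, hb] using hab

/-- The extension of `foldHom` to the graph obtained by joining the folded vertex `x` to a
neighbour `z` of its image `y`. -/
def addEdgeFoldHom [DecidableEq α] (hxy : G.neighborSet x ⊆ G.neighborSet y) (hyz : G.Adj y z) :
    addEdge G x z →g G :=
  addEdge.liftHom (foldHom hxy) <| by
    have hzx : z ≠ x := by
      rintro rfl
      exact G.irrefl (hxy hyz.symm)
    simpa [foldHom, hzx] using hyz

end Fold

theorem stmt_13_general {α : Type*} (G : SimpleGraph α) (k : ℕ)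
    (hno : ∀ j, 1 ≤ j → j ≤ k - 1 → ¬ hasCycleLength G (2 * j + 1))
    (x y z : α) (hxy : G.neighborSet x ⊆ G.neighborSet y) (hyz : G.Adj y z) :
    ∀ j, 1 ≤ j → j ≤ k - 1 → ¬ hasCycleLength (addEdge G x z) (2 * j + 1) := by
  classical
  intro j _ hjk hcycle
  obtain ⟨m, hm, ⟨i, rfl⟩, hcycle'⟩ :=
    hcycle.exists_odd_le_of_hom (odd_two_mul_add_one j) (addEdgeFoldHom hxy hyz)
  have hthree : 3 ≤ 2 * i + 1 := hcycle'.three_le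
  exact hno i (by lia) (by lia) hcycle'

theorem stmt_13 {α : Type*} [Fintype α] (G : SimpleGraph α) (k : ℕ) (hk : 1 ≤ k)
    (hno : ∀ j, 1 ≤ j → j ≤ k - 1 → ¬ hasCycleLength G (2 * j + 1))
    (x' v' v'' x : α) (hne : v' ≠ v'')
    (h1 : G.Adj x' v') (h2 : G.Adj x' v'')
    (hx1 : x ≠ x') (hx2 : x ≠ v') (hx3 : x ≠ v'')
    (hnbr : G.neighborSet x = {v'}) :
    ∀ j, 1 ≤ j → j ≤ k - 1 → ¬ hasCycleLength (addEdge G x v'') (2 * j + 1) := by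
  exact stmt_13_general G k hno x x' v'' (by simpa [hnbr] using h1) h2
end
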